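/- Let p ≥ 2 and d ≥ 1. There exists a constant A_{p,d}, depending only on p and d, such that for every n ∈ ℕ^d and every negatively associated field {Y_k : k ≤ n} of random variables with E[Y_k] = 0 and E[|Y_k|^p] < ∞, with T_k = Σ_{i ≤ k} Y_i and M_n = max_{k ≤ n} |T_k|, one has E[M_n^p] ≤ A_{p,d} { (E[M_n])^p + ( Σ_{k ≤ n} E[Y_k²] )^{p/2} + Σ_{k ≤ n} E[|Y_k|^p] }. -/

import Mathlib

/-!
Write `q = p / 2`, `J = Icc 1 n`, `F = max_k (T_k)⁺` and `V = ∑ Y_i ^ 2`. Since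
`M_n ^ p ≤ F(Y) ^ p + F(-Y) ^ p`, `F(±Y) ≤ M_n`, and `-Y` is again negatively associated, it suffices
to bound `E F ^ p` for one field.

Symmetrization is replaced by a random splitting of the index set. For `A ⊆ J` let `F_A`, `F_{J \ A}`
be the one-sided maxima of the partial sums restricted to the two halves, and `G_A` the maximum of the
partial sums whose entries are signed `+1` on `A` and `-1` off `A`. If the signed sum at the index
maximizing `T_k` is at most half of `F`, both halves carry at least `F / 4`, whence
`F ^ (2q) ≤ 16 ^ q F_A ^ q F_{J \ A} ^ q + 4 ^ q G_A ^ (2q)` (`posMax_split`). Both `F_A` and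
`F_{J \ A}` are nondecreasing functions of disjoint sets of variables, so negative association
decouples their product (`posMax_decouple`). Averaged over all `A`, `G_A ^ (2q)` is at most a constant
times `V ^ q`: Lévy's reflection argument, one coordinate at a time, removes the maximum at the cost
of a factor `2 ^ d` (`levy_orthant`), and Khintchine's inequality bounds the remaining sign average
(`khintchine`, `signMax_khintchine`). Choosing an `A` at least as good as the average gives
`E F ^ (2q) ≤ c (E F ^ q) ^ 2 + c E V ^ q` (`posMax_moment_step`), and interpolating `E F ^ q` between
`E F` and `E F ^ (2q)` absorbs the first term up to `(E F) ^ (2q)` (`posMax_moment`).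

Finally `V` is the sum of the squares of the positive parts of `Y_i` and of `-Y_i`. These are monotone
functions of negatively associated variables, so `E V ^ q` is controlled by a Rosenthal inequality for
nonnegative variables (`rosenthal_pos`).
-/

open MeasureTheory Filter Finset

noncomputable section

/-- `plog x = ln (max x e)`, the truncated logarithm used in the paper. -/
def plog (x : ℝ) : ℝ := Real.log (max x (Real.exp 1))

/-- A family of real random variables `X i`, `i ∈ S`, is *negatively associated* if for every
pair of disjoint finite subsets `A`, `B` of `S` and all coordinatewise non-decreasing functions
`f`, `g`, one has `Cov (f (X_i, i ∈ A), g (X_j, j ∈ B)) ≤ 0`, whenever the covariance exists. -/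
def NegAssocOn {Ω : Type} [MeasurableSpace Ω] (μ : Measure Ω) {ι : Type}
    (X : ι → Ω → ℝ) (S : Set ι) : Prop :=
  ∀ A B : Finset ι, ↑A ⊆ S → ↑B ⊆ S → Disjoint A B →
    ∀ (f : (↥A → ℝ) → ℝ) (g : (↥B → ℝ) → ℝ), Monotone f → Monotone g →
      Integrable (fun ω => f (fun i => X i ω)) μ →
      Integrable (fun ω => g (fun j => X j ω)) μ →
      Integrable (fun ω => f (fun i => X i ω) * g (fun j => X j ω)) μ →
      ∫ ω, f (fun i => X i ω) * g (fun j => X j ω) ∂μ ≤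
        (∫ ω, f (fun i => X i ω) ∂μ) * ∫ ω, g (fun j => X j ω) ∂μ

section Aux

open scoped Classical

/-! ### Sign averages: Lévy's reflection principle and Khintchine's inequality -/

/-- The sign vector attached to a subset `A`: `+1` on `A` and `-1` off `A`. -/
def signOf {ι : Type} [DecidableEq ι] (A : Finset ι) (i : ι) : ℝ := if i ∈ A then 1 else -1

/-- Lévy's maximal inequality in one coordinate `c`, with the uniform measure on sign vectors. The
sums over `D k` cut off at level `c i ≤ m` cost at most a factor `2` over the uncut sums: flipping
the signs of the entries beyond the first level `τ A` at which the threshold is exceeded is an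
injection, and the full sums before and after the flip average to the cut-off sum, so one of the
two exceeds the threshold as well. -/
theorem levy_step {ι κ : Type} [DecidableEq ι] (J : Finset ι) (K : Finset κ)
    (D : κ → ι → Prop) (c : ι → ℕ) (x : ι → ℝ) (t : ℝ) :
    (J.powerset.filter fun A => ∃ k ∈ K, ∃ m : ℕ,
        t < |∑ i ∈ J with (D k i ∧ c i ≤ m), signOf A i * x i|).card ≤
      2 * (J.powerset.filter fun A => ∃ k ∈ K,
        t < |∑ i ∈ J with D k i, signOf A i * x i|).card := by
  set P : Finset ι → ℕ → Prop := fun A m =>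
    ∃ k ∈ K, t < |∑ i ∈ J with (D k i ∧ c i ≤ m), signOf A i * x i| with hP
  set L := J.powerset.filter fun A => ∃ k ∈ K, ∃ m : ℕ,
        t < |∑ i ∈ J with (D k i ∧ c i ≤ m), signOf A i * x i| with hL
  set B := J.powerset.filter fun A => ∃ k ∈ K,
        t < |∑ i ∈ J with D k i, signOf A i * x i| with hB
  have hLP : ∀ A ∈ L, ∃ m, P A m := by
    intro A hA
    obtain ⟨_, k, hk, m, h⟩ := Finset.mem_filter.1 hA
    exact ⟨m, k, hk, h⟩
  -- the first level at which the threshold is exceeded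
  set τ : Finset ι → ℕ := fun A => if h : ∃ m, P A m then Nat.find h else 0 with hτ
  have hτP : ∀ A ∈ L, P A (τ A) := by
    intro A hA
    have h := hLP A hA
    simp only [hτ, h, dif_pos]
    exact Nat.find_spec h
  have hτmin : ∀ A m, P A m → τ A ≤ m := by
    intro A m hm
    have h : ∃ m, P A m := ⟨m, hm⟩
    simp only [hτ, h, dif_pos]
    exact Nat.find_min' h hm
  set ρ : Finset ι → Finset ι := fun A => symmDiff A (J.filter fun i => τ A < c i) with hρ
  have hρle : ∀ A i, c i ≤ τ A → signOf (ρ A) i = signOf A i := by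
    intro A i hi
    have : i ∈ ρ A ↔ i ∈ A := by
      simp only [hρ, Finset.mem_symmDiff, Finset.mem_filter]
      have : ¬ τ A < c i := by omega
      tauto
    simp only [signOf, this]
  have hρgt : ∀ A, ∀ i ∈ J, τ A < c i → signOf (ρ A) i = - signOf A i := by
    intro A i hiJ hi
    have : i ∈ ρ A ↔ i ∉ A := by
      simp only [hρ, Finset.mem_symmDiff, Finset.mem_filter]
      tauto
    by_cases h : i ∈ A <;> simp [signOf, this, h]
  have hPρ : ∀ A m, m ≤ τ A → (P (ρ A) m ↔ P A m) := by
    intro A m hm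
    have : ∀ k, ∑ i ∈ J with (D k i ∧ c i ≤ m), signOf (ρ A) i * x i =
        ∑ i ∈ J with (D k i ∧ c i ≤ m), signOf A i * x i := by
      intro k
      refine Finset.sum_congr rfl fun i hi => ?_
      rw [hρle A i ((Finset.mem_filter.1 hi).2.2.trans hm)]
    simp only [hP, this]
  have hτρ : ∀ A ∈ L, τ (ρ A) = τ A := by
    intro A hA
    have h1 : P (ρ A) (τ A) := (hPρ A _ le_rfl).2 (hτP A hA)
    have h2 : τ (ρ A) ≤ τ A := hτmin _ _ h1
    refine le_antisymm h2 (hτmin _ _ ((hPρ A _ h2).1 ?_))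
    have h : ∃ m, P (ρ A) m := ⟨_, h1⟩
    have h3 : τ (ρ A) = Nat.find h := by simp only [hτ, h, dif_pos]
    rw [h3]
    exact Nat.find_spec h
  have hρρ : ∀ A ∈ L, ρ (ρ A) = A := by
    intro A hA
    have : ρ (ρ A) = symmDiff (ρ A) (J.filter fun i => τ A < c i) := by
      rw [← hτρ A hA]
    rw [this, hρ]
    simp
  have hsub : ∀ A, A ⊆ J → ρ A ⊆ J := by
    intro A hA i hi
    simp only [hρ, Finset.mem_symmDiff, Finset.mem_filter] at hi
    rcases hi with h | h
    · exact hA h.1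
    · exact h.1.1
  -- the flipped and unflipped full sums average to the cut-off sum
  have hor : ∀ A ∈ L, A ∈ B ∨ ρ A ∈ B := by
    intro A hA
    have hAJ : A ⊆ J := Finset.mem_powerset.1 (Finset.mem_filter.1 hA).1
    obtain ⟨k, hk, h⟩ := hτP A hA
    have key : ∑ i ∈ J with D k i, signOf A i * x i + ∑ i ∈ J with D k i, signOf (ρ A) i * x i
        = 2 * ∑ i ∈ J with (D k i ∧ c i ≤ τ A), signOf A i * x i := by
      rw [← Finset.sum_add_distrib, Finset.mul_sum, ← Finset.filter_filter,
        Finset.sum_filter (fun i => c i ≤ τ A)]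
      refine Finset.sum_congr rfl fun i hi => ?_
      split_ifs with hc
      · rw [hρle A i hc]; ring
      · rw [hρgt A i (Finset.mem_filter.1 hi).1 (by omega)]; ring
    by_contra hcon
    push Not at hcon
    have h1 : |∑ i ∈ J with D k i, signOf A i * x i| ≤ t := by
      by_contra hlt
      exact hcon.1 (Finset.mem_filter.2 ⟨Finset.mem_powerset.2 hAJ, k, hk, not_le.1 hlt⟩)
    have h2 : |∑ i ∈ J with D k i, signOf (ρ A) i * x i| ≤ t := by
      by_contra hlt
      exact hcon.2 (Finset.mem_filter.2 ⟨Finset.mem_powerset.2 (hsub A hAJ), k, hk, not_le.1 hlt⟩)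
    rw [abs_le] at h1 h2
    have : |∑ i ∈ J with (D k i ∧ c i ≤ τ A), signOf A i * x i| ≤ t := by
      rw [abs_le]; constructor <;> linarith
    linarith
  have hcov : L ⊆ B ∪ L.filter (fun A => ρ A ∈ B) := by
    intro A hA
    rcases hor A hA with h | h
    · exact Finset.mem_union_left _ h
    · exact Finset.mem_union_right _ (Finset.mem_filter.2 ⟨hA, h⟩)
  have hinj : (L.filter (fun A => ρ A ∈ B)).card ≤ B.card := by
    refine Finset.card_le_card_of_injOn ρ (fun A hA => (Finset.mem_filter.1 hA).2) ?_
    intro A hA A' hA' h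
    rw [← hρρ A (Finset.mem_filter.1 hA).1, ← hρρ A' (Finset.mem_filter.1 hA').1, h]
  calc L.card ≤ (B ∪ L.filter (fun A => ρ A ∈ B)).card := Finset.card_le_card hcov
    _ ≤ B.card + (L.filter (fun A => ρ A ∈ B)).card := Finset.card_union_le _ _
    _ ≤ 2 * B.card := by omega

/-- Applying `levy_step` to the coordinates in `s` one after another compares the maximum of the sums
over the regions `i j ≤ k j` (`j ∈ s`) with the single total sum. -/
theorem levy_orthant {d : ℕ} (J : Finset (Fin d → ℕ)) (x : (Fin d → ℕ) → ℝ) (t : ℝ)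
    (s : Finset (Fin d)) :
    (J.powerset.filter fun A => ∃ k ∈ J,
        t < |∑ i ∈ J with (∀ j ∈ s, i j ≤ k j), signOf A i * x i|).card ≤
      2 ^ s.card * (J.powerset.filter fun A =>
        t < |∑ i ∈ J, signOf A i * x i|).card := by
  induction s using Finset.induction_on with
  | empty =>
    simp only [Finset.card_empty, pow_zero, one_mul]
    refine Finset.card_le_card fun A hA => ?_
    obtain ⟨h1, k, _, h2⟩ := Finset.mem_filter.1 hA
    refine Finset.mem_filter.2 ⟨h1, ?_⟩
    simpa using h2
  | insert j s hj ih =>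
    have h := levy_step J J (fun k i => ∀ j ∈ s, i j ≤ k j) (fun i => i j) x t
    rw [Finset.card_insert_of_notMem hj, pow_succ]
    refine le_trans (Finset.card_le_card ?_) (h.trans ?_)
    · intro A hA
      obtain ⟨h1, k, hk, h2⟩ := Finset.mem_filter.1 hA
      refine Finset.mem_filter.2 ⟨h1, k, hk, k j, ?_⟩
      convert h2 using 4
      simp [and_comm]
    · rw [mul_comm _ 2, mul_assoc]
      refine Nat.mul_le_mul_left 2 (le_trans (le_of_eq ?_) ih)
      congr!

/-- Comparison of tails gives comparison of moments (layer-cake formula for counting measure). -/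
theorem sum_rpow_le_of_card_le {α : Type} (s : Finset α) (a b : α → ℝ)
    (ha : ∀ i ∈ s, 0 ≤ a i) (hb : ∀ i ∈ s, 0 ≤ b i) (N : ℕ) {p : ℝ} (hp : 0 < p)
    (h : ∀ t : ℝ, (s.filter fun i => t < a i).card ≤ N * (s.filter fun i => t < b i).card) :
    ∑ i ∈ s, a i ^ p ≤ N * ∑ i ∈ s, b i ^ p := by
  classical
  let _ : MeasurableSpace ↥s := ⊤
  have key : ∀ f : α → ℝ, (∀ i ∈ s, 0 ≤ f i) → ENNReal.ofReal (∑ i ∈ s, f i ^ p) =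
      ENNReal.ofReal p * ∫⁻ t in Set.Ioi (0:ℝ),
        ((s.filter fun i => t < f i).card : ENNReal) * ENNReal.ofReal (t ^ (p - 1)) := by
    intro f hf
    have h1 := lintegral_rpow_eq_lintegral_meas_lt_mul (Measure.count : Measure ↥s)
      (f := fun i => f i) (Filter.Eventually.of_forall fun i => hf i i.2)
      (measurable_of_finite _).aemeasurable hp
    have h2 : ∫⁻ i : ↥s, ENNReal.ofReal (f i ^ p) ∂Measure.count =
        ENNReal.ofReal (∑ i ∈ s, f i ^ p) := by
      rw [lintegral_count, tsum_fintype, ENNReal.ofReal_sum_of_nonneg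
        (fun i hi => Real.rpow_nonneg (hf i hi) p)]
      exact Finset.sum_coe_sort s (fun i => ENNReal.ofReal (f i ^ p))
    rw [← h2, h1]
    congr 1
    refine lintegral_congr fun t => ?_
    congr 1
    rw [Measure.count_apply_finite _ (Set.toFinite _)]
    congr 1
    rw [← Finset.card_map (Function.Embedding.subtype _)]
    congr 1
    ext i
    simp [and_comm]
  have hB : 0 ≤ ∑ i ∈ s, b i ^ p := Finset.sum_nonneg fun i hi => Real.rpow_nonneg (hb i hi) p
  rw [← ENNReal.ofReal_le_ofReal_iff (by positivity), ENNReal.ofReal_mul (by positivity),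
    key a ha, key b hb, mul_left_comm]
  gcongr
  rw [ENNReal.ofReal_natCast, ← lintegral_const_mul' _ _ (ENNReal.natCast_ne_top N)]
  refine lintegral_mono fun t => ?_
  rw [← mul_assoc]
  gcongr
  exact_mod_cast h t

/-- The sub-Gaussian bound for Rademacher sums. -/
theorem sum_exp_signOf {ι : Type} [DecidableEq ι] (J : Finset ι) (x : ι → ℝ) :
    ∑ A ∈ J.powerset, Real.exp (∑ i ∈ J, signOf A i * x i) ≤
      2 ^ J.card * Real.exp ((∑ i ∈ J, x i ^ 2) / 2) := by
  have h1 : ∏ i ∈ J, (Real.exp (x i) + Real.exp (-x i)) =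
      ∑ A ∈ J.powerset, Real.exp (∑ i ∈ J, signOf A i * x i) := by
    rw [Finset.prod_add]
    refine Finset.sum_congr rfl fun A hA => ?_
    rw [← Real.exp_sum, ← Real.exp_sum, ← Real.exp_add,
      ← Finset.sum_sdiff (Finset.mem_powerset.1 hA), add_comm]
    congr 2
    · refine Finset.sum_congr rfl fun i hi => ?_
      simp [signOf, (Finset.mem_sdiff.1 hi).2]
    · refine Finset.sum_congr rfl fun i hi => ?_
      simp [signOf, hi]
  rw [← h1, Finset.sum_div, Real.exp_sum, ← Finset.prod_const, ← Finset.prod_mul_distrib]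
  refine Finset.prod_le_prod (fun i _ => by positivity) fun i _ => ?_
  have := Real.cosh_le_exp_half_sq (x i)
  rw [Real.cosh_eq] at this
  linarith

/-- Khintchine's inequality (upper bound). -/
theorem khintchine (p : ℝ) (hp : 0 < p) : ∃ C : ℝ, 0 ≤ C ∧
    ∀ (ι : Type) (_ : DecidableEq ι) (J : Finset ι) (x : ι → ℝ),
      ∑ A ∈ J.powerset, |∑ i ∈ J, signOf A i * x i| ^ p ≤
        2 ^ J.card * (C * (∑ i ∈ J, x i ^ 2) ^ (p / 2)) := by
  set N := ⌈p⌉₊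
  have hpow : ∀ y : ℝ, |y| ^ p ≤ (1 + N.factorial) * (Real.exp y + Real.exp (-y)) := by
    intro y
    have h0 : |y| ^ p ≤ 1 + |y| ^ N := by
      rcases le_total |y| 1 with h | h
      · have := Real.rpow_le_one (abs_nonneg y) h hp.le
        have : 0 ≤ |y| ^ N := by positivity
        linarith
      · have := Real.rpow_le_rpow_of_exponent_le h (Nat.le_ceil p)
        rw [Real.rpow_natCast] at this
        linarith
    have h1 := Real.pow_div_factorial_le_exp |y| (abs_nonneg y) N
    rw [div_le_iff₀ (by positivity)] at h1
    have h2 : 1 ≤ Real.exp |y| := Real.one_le_exp (abs_nonneg y)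
    have h3 : Real.exp |y| ≤ Real.exp y + Real.exp (-y) := by
      rcases abs_choice y with h | h <;> rw [h] <;>
        linarith [Real.exp_pos y, Real.exp_pos (-y)]
    calc |y| ^ p ≤ (1 + N.factorial) * Real.exp |y| := by linarith
      _ ≤ _ := by gcongr
  refine ⟨(1 + N.factorial) * (2 * Real.exp (1 / 2)), by positivity, ?_⟩
  intro ι _ J x
  set V := ∑ i ∈ J, x i ^ 2 with hV
  have hV0 : 0 ≤ V := Finset.sum_nonneg fun i _ => sq_nonneg _
  rcases hV0.eq_or_lt with h | hpos
  · have hx : ∀ i ∈ J, x i = 0 := by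
      intro i hi
      have := (Finset.sum_eq_zero_iff_of_nonneg (fun i _ => sq_nonneg (x i))).1 h.symm i hi
      exact pow_eq_zero_iff (two_ne_zero) |>.1 this
    have : ∀ A : Finset ι, ∑ i ∈ J, signOf A i * x i = 0 := fun A =>
      Finset.sum_eq_zero fun i hi => by rw [hx i hi, mul_zero]
    simp only [this, abs_zero, Real.zero_rpow hp.ne', Finset.sum_const_zero]
    positivity
  · set σ := √V with hσ
    have hσ0 : 0 < σ := Real.sqrt_pos.2 hpos
    have hσp : σ ^ p = V ^ (p / 2) := by
      rw [hσ, Real.sqrt_eq_rpow, ← Real.rpow_mul hV0]; congr 1; ring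
    have hsc : ∀ A : Finset ι, ∑ i ∈ J, signOf A i * x i =
        σ * ∑ i ∈ J, signOf A i * (x i / σ) := by
      intro A
      rw [Finset.mul_sum]
      refine Finset.sum_congr rfl fun i _ => ?_
      field_simp
    have hone : ∀ z : ι → ℝ, ∑ i ∈ J, z i ^ 2 = 1 →
        ∑ A ∈ J.powerset, Real.exp (∑ i ∈ J, signOf A i * z i) ≤
          2 ^ J.card * Real.exp (1 / 2) := by
      intro z hz
      have := sum_exp_signOf J z
      rwa [hz] at this
    have hz1 : ∑ i ∈ J, (x i / σ) ^ 2 = 1 := by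
      simp only [div_pow]
      rw [← Finset.sum_div, hσ, Real.sq_sqrt hV0]
      exact div_self hpos.ne'
    have e1 := hone (fun i => x i / σ) hz1
    have e2 := hone (fun i => -(x i / σ)) (by simpa using hz1)
    simp only [mul_neg, Finset.sum_neg_distrib] at e2
    calc ∑ A ∈ J.powerset, |∑ i ∈ J, signOf A i * x i| ^ p
        = ∑ A ∈ J.powerset, σ ^ p * |∑ i ∈ J, signOf A i * (x i / σ)| ^ p := by
          refine Finset.sum_congr rfl fun A _ => ?_
          rw [hsc A, abs_mul, abs_of_pos hσ0, Real.mul_rpow hσ0.le (abs_nonneg _)]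
      _ ≤ ∑ A ∈ J.powerset, σ ^ p * ((1 + N.factorial) *
            (Real.exp (∑ i ∈ J, signOf A i * (x i / σ)) +
              Real.exp (-∑ i ∈ J, signOf A i * (x i / σ)))) := by
          gcongr
          exact hpow _
      _ = σ ^ p * ((1 + N.factorial) *
            (∑ A ∈ J.powerset, Real.exp (∑ i ∈ J, signOf A i * (x i / σ)) +
              ∑ A ∈ J.powerset, Real.exp (-∑ i ∈ J, signOf A i * (x i / σ)))) := by
          rw [← Finset.mul_sum, ← Finset.mul_sum, Finset.sum_add_distrib]
      _ ≤ σ ^ p * ((1 + N.factorial) *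
            (2 ^ J.card * Real.exp (1 / 2) + 2 ^ J.card * Real.exp (1 / 2))) := by
          gcongr
      _ = _ := by rw [hσp]; ring

/-! ### Maxima over orthants and their splitting into two halves -/

/-- The maximum over `k ∈ J` of the positive parts of the sums of `x i` over `i ∈ A`, `i ≤ k`. -/
def posMax {d : ℕ} (J : Finset (Fin d → ℕ)) (hJ : J.Nonempty) (A : Finset (Fin d → ℕ))
    (x : (Fin d → ℕ) → ℝ) : ℝ :=
  J.sup' hJ fun k => max 0 (∑ i ∈ A with i ≤ k, x i)

/-- The maximum over `k ∈ J` of the absolute values of the sums over `i ∈ J`, `i ≤ k`, of the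
entries `x i` signed by the subset `A`. -/
def signMax {d : ℕ} (J : Finset (Fin d → ℕ)) (hJ : J.Nonempty) (A : Finset (Fin d → ℕ))
    (x : (Fin d → ℕ) → ℝ) : ℝ :=
  J.sup' hJ fun k => |∑ i ∈ J with i ≤ k, signOf A i * x i|

section Deterministic

variable {d : ℕ} {J : Finset (Fin d → ℕ)} (hJ : J.Nonempty)

theorem posMax_nonneg (A : Finset (Fin d → ℕ)) (x : (Fin d → ℕ) → ℝ) : 0 ≤ posMax J hJ A x := by
  obtain ⟨k, hk⟩ := hJ
  exact (le_max_left _ _).trans (Finset.le_sup' (fun k => max 0 (∑ i ∈ A with i ≤ k, x i)) hk)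

theorem signMax_nonneg (A : Finset (Fin d → ℕ)) (x : (Fin d → ℕ) → ℝ) :
    0 ≤ signMax J hJ A x := by
  obtain ⟨k, hk⟩ := hJ
  exact (abs_nonneg _).trans
    (Finset.le_sup' (fun k => |∑ i ∈ J with i ≤ k, signOf A i * x i|) hk)

theorem le_posMax (A : Finset (Fin d → ℕ)) (x : (Fin d → ℕ) → ℝ) {k : Fin d → ℕ} (hk : k ∈ J) :
    ∑ i ∈ A with i ≤ k, x i ≤ posMax J hJ A x :=
  (le_max_right _ _).trans (Finset.le_sup' (fun k => max 0 (∑ i ∈ A with i ≤ k, x i)) hk)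

theorem le_signMax (A : Finset (Fin d → ℕ)) (x : (Fin d → ℕ) → ℝ) {k : Fin d → ℕ} (hk : k ∈ J) :
    |∑ i ∈ J with i ≤ k, signOf A i * x i| ≤ signMax J hJ A x :=
  Finset.le_sup' (fun k => |∑ i ∈ J with i ≤ k, signOf A i * x i|) hk

theorem posMax_mono (A : Finset (Fin d → ℕ)) {x y : (Fin d → ℕ) → ℝ} (h : ∀ i ∈ A, x i ≤ y i) :
    posMax J hJ A x ≤ posMax J hJ A y := by
  refine Finset.sup'_le _ _ fun k hk => max_le (posMax_nonneg hJ A y) ?_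
  exact (Finset.sum_le_sum fun i hi => h i (Finset.mem_filter.1 hi).1).trans (le_posMax hJ A y hk)

theorem posMax_le_sum {A : Finset (Fin d → ℕ)} (hA : A ⊆ J) (x : (Fin d → ℕ) → ℝ) :
    posMax J hJ A x ≤ ∑ i ∈ J, |x i| := by
  refine Finset.sup'_le _ _ fun k hk => max_le (Finset.sum_nonneg fun i _ => abs_nonneg _) ?_
  refine (Finset.sum_le_sum fun i _ => le_abs_self (x i)).trans ?_
  exact Finset.sum_le_sum_of_subset_of_nonneg ((Finset.filter_subset _ _).trans hA)
    fun i _ _ => abs_nonneg _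

theorem abs_signOf_mul (A : Finset (Fin d → ℕ)) (i : Fin d → ℕ) (r : ℝ) :
    |signOf A i * r| = |r| := by
  unfold signOf; split_ifs <;> simp

theorem signMax_le_sum (A : Finset (Fin d → ℕ)) (x : (Fin d → ℕ) → ℝ) :
    signMax J hJ A x ≤ ∑ i ∈ J, |x i| := by
  refine Finset.sup'_le _ _ fun k hk => ?_
  refine (Finset.abs_sum_le_sum_abs _ _).trans ?_
  simp only [abs_signOf_mul]
  exact Finset.sum_le_sum_of_subset_of_nonneg (Finset.filter_subset _ _) fun i _ _ => abs_nonneg _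

theorem signMax_compl (A : Finset (Fin d → ℕ)) (x : (Fin d → ℕ) → ℝ) :
    signMax J hJ (J \ A) x = signMax J hJ A x := by
  unfold signMax
  congr 1
  ext k
  rw [← abs_neg, ← Finset.sum_neg_distrib]
  congr 1
  refine Finset.sum_congr rfl fun i hi => ?_
  have : i ∈ J := (Finset.mem_filter.1 hi).1
  by_cases h : i ∈ A <;> simp [signOf, h, this]

/-- The sum over `A` is the average of the unsigned sum and the sum signed by `A`. -/
theorem two_mul_sum_subset {A : Finset (Fin d → ℕ)} (hA : A ⊆ J) (x : (Fin d → ℕ) → ℝ)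
    (k : Fin d → ℕ) :
    2 * ∑ i ∈ A with i ≤ k, x i =
      ∑ i ∈ J with i ≤ k, x i + ∑ i ∈ J with i ≤ k, signOf A i * x i := by
  have h : A.filter (· ≤ k) = (J.filter (· ≤ k)).filter (· ∈ A) := by
    ext i
    simp only [Finset.mem_filter]
    constructor
    · rintro ⟨h1, h2⟩; exact ⟨⟨hA h1, h2⟩, h1⟩
    · rintro ⟨⟨_, h2⟩, h1⟩; exact ⟨h1, h2⟩
  rw [h, Finset.sum_filter (· ∈ A), Finset.mul_sum, ← Finset.sum_add_distrib]
  refine Finset.sum_congr rfl fun i _ => ?_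
  unfold signOf
  split_ifs <;> ring

theorem posMax_subset_le {A : Finset (Fin d → ℕ)} (hA : A ⊆ J) (x : (Fin d → ℕ) → ℝ) :
    posMax J hJ A x ≤ (posMax J hJ J x + signMax J hJ A x) / 2 := by
  have h1 := posMax_nonneg hJ J x
  have h2 := signMax_nonneg hJ A x
  refine Finset.sup'_le _ _ fun k hk => max_le (by positivity) ?_
  have h3 := two_mul_sum_subset hA x k
  have h4 := le_posMax hJ J x hk
  have h5 := (le_abs_self _).trans (le_signMax hJ A x hk)
  linarith

theorem posMax_subset_rpow_le {q : ℝ} (hq : 0 ≤ q) {A : Finset (Fin d → ℕ)} (hA : A ⊆ J)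
    (x : (Fin d → ℕ) → ℝ) :
    posMax J hJ A x ^ q ≤ posMax J hJ J x ^ q + signMax J hJ A x ^ q := by
  have h0 := posMax_nonneg hJ A x
  have h1 := posMax_nonneg hJ J x
  have h2 := signMax_nonneg hJ A x
  have h := posMax_subset_le hJ hA x
  have h3 := Real.rpow_nonneg h1 q
  have h4 := Real.rpow_nonneg h2 q
  rcases le_total (posMax J hJ J x) (signMax J hJ A x) with hle | hle
  · have := Real.rpow_le_rpow h0 (by linarith : _ ≤ signMax J hJ A x) hq
    linarith
  · have := Real.rpow_le_rpow h0 (by linarith : _ ≤ posMax J hJ J x) hq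
    linarith

/-- If the signed sum at the maximizing index is at most half of the maximum, then both halves
`A` and `J \ A` carry at least a quarter of it; otherwise the signed maximum is large. -/
theorem posMax_split {q : ℝ} (hq : 0 < q) {A : Finset (Fin d → ℕ)} (hA : A ⊆ J)
    (x : (Fin d → ℕ) → ℝ) :
    posMax J hJ J x ^ (2 * q) ≤
      16 ^ q * (posMax J hJ A x ^ q * posMax J hJ (J \ A) x ^ q) +
        4 ^ q * signMax J hJ A x ^ (2 * q) := by
  have hA0 := posMax_nonneg hJ A x
  have hB0 := posMax_nonneg hJ (J \ A) x
  have hG0 := signMax_nonneg hJ A x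
  have hF0 := posMax_nonneg hJ J x
  have t1 : 0 ≤ 16 ^ q * (posMax J hJ A x ^ q * posMax J hJ (J \ A) x ^ q) := by positivity
  have t2 : 0 ≤ 4 ^ q * signMax J hJ A x ^ (2 * q) := by positivity
  have hsq : ∀ r : ℝ, 0 ≤ r → r ^ (2 * q) = (r ^ 2) ^ q := by
    intro r hr
    rw [Real.rpow_mul hr, Real.rpow_two]
  obtain ⟨k, hk, hkeq⟩ := Finset.exists_mem_eq_sup' hJ
    (fun k => max 0 (∑ i ∈ J with i ≤ k, x i))
  change posMax J hJ J x = _ at hkeq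
  rcases le_or_gt (∑ i ∈ J with i ≤ k, x i) 0 with hT | hT
  · have : posMax J hJ J x = 0 := by rw [hkeq, max_eq_left hT]
    rw [this, Real.zero_rpow (by positivity)]
    linarith
  · rw [max_eq_right hT.le] at hkeq
    set T := ∑ i ∈ J with i ≤ k, x i with hTdef
    set R := ∑ i ∈ J with i ≤ k, signOf A i * x i with hR
    have hRG : |R| ≤ signMax J hJ A x := le_signMax hJ A x hk
    rw [hkeq]
    rcases le_or_gt |R| (T / 2) with h | h
    · have e1 := two_mul_sum_subset hA x k
      have e2 : ∑ i ∈ A with i ≤ k, x i + ∑ i ∈ J \ A with i ≤ k, x i = T := by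
        rw [hTdef, ← Finset.sum_union, ← Finset.filter_union, Finset.union_sdiff_of_subset hA]
        exact Finset.disjoint_filter_filter Finset.disjoint_sdiff
      rw [← hTdef, ← hR] at e1
      rw [abs_le] at h
      have a1 : T / 4 ≤ posMax J hJ A x := by
        have := le_posMax hJ A x hk
        linarith
      have a2 : T / 4 ≤ posMax J hJ (J \ A) x := by
        have := le_posMax hJ (J \ A) x hk
        linarith
      have a3 : T ^ 2 ≤ 16 * (posMax J hJ A x * posMax J hJ (J \ A) x) := by
        have := mul_le_mul a1 a2 (by positivity) hA0
        nlinarith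
      have a4 := Real.rpow_le_rpow (by positivity) a3 hq.le
      rw [Real.mul_rpow (by norm_num) (by positivity), Real.mul_rpow hA0 hB0] at a4
      rw [hsq T hT.le]
      linarith
    · have a3 : T ^ 2 ≤ 4 * signMax J hJ A x ^ 2 := by nlinarith
      have a4 := Real.rpow_le_rpow (by positivity) a3 hq.le
      rw [Real.mul_rpow (by norm_num) (by positivity)] at a4
      rw [hsq T hT.le, hsq _ hG0] at *
      linarith

end Deterministic

/-- Maximal Khintchine inequality for sums over orthants. -/
theorem signMax_khintchine (p : ℝ) (hp : 0 < p) (d : ℕ) : ∃ C : ℝ, 0 ≤ C ∧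
    ∀ (J : Finset (Fin d → ℕ)) (hJ : J.Nonempty) (x : (Fin d → ℕ) → ℝ),
      ∑ A ∈ J.powerset, signMax J hJ A x ^ p ≤
        2 ^ J.card * (C * (∑ i ∈ J, x i ^ 2) ^ (p / 2)) := by
  obtain ⟨C, hC, h⟩ := khintchine p hp
  refine ⟨2 ^ d * C, by positivity, fun J hJ x => ?_⟩
  have h1 := sum_rpow_le_of_card_le J.powerset (fun A => signMax J hJ A x)
    (fun A => |∑ i ∈ J, signOf A i * x i|) (fun A _ => signMax_nonneg hJ A x)
    (fun A _ => abs_nonneg _) (2 ^ d) hp (by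
      intro t
      have h2 := levy_orthant J x t Finset.univ
      rw [Finset.card_univ, Fintype.card_fin] at h2
      refine le_trans (Finset.card_le_card ?_) (h2.trans (le_of_eq (by congr!)))
      intro A hA
      obtain ⟨h3, h4⟩ := Finset.mem_filter.1 hA
      refine Finset.mem_filter.2 ⟨h3, ?_⟩
      obtain ⟨k, hk, h5⟩ := (Finset.lt_sup'_iff hJ).1 h4
      refine ⟨k, hk, ?_⟩
      rw [Finset.filter_congr (q := fun i => i ≤ k) fun i _ =>
        ⟨fun h j => h j (Finset.mem_univ j), fun h j _ => h j⟩]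
      exact h5)
  have h2 := h _ inferInstance J x
  push_cast at h1
  calc _ ≤ _ := h1
    _ ≤ 2 ^ d * (2 ^ J.card * (C * (∑ i ∈ J, x i ^ 2) ^ (p / 2))) := by gcongr
    _ = _ := by ring

/-! ### Interpolation, absorption and integrability -/

/-- Interpolation of the power `q` between the powers `1` and `2 * q`: the first term dominates for
`f ≤ t`, the second for `t ≤ f`. -/
theorem rpow_le_interp {q f t : ℝ} (hq : 1 ≤ q) (hf : 0 ≤ f) (ht : 0 < t) :
    f ^ q ≤ t ^ (q - 1) * f + (t ^ q)⁻¹ * f ^ (2 * q) := by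
  have h1 : 0 ≤ t ^ (q - 1) * f := by positivity
  have h2 : 0 ≤ (t ^ q)⁻¹ * f ^ (2 * q) := by positivity
  rcases le_or_gt f t with h | h
  · rcases hf.eq_or_lt with h0 | h0
    · rw [← h0] at h1 h2 ⊢
      rw [Real.zero_rpow (by linarith : q ≠ 0)]
      linarith
    · have h3 : f ^ q = f ^ (q - 1) * f := by
        rw [← Real.rpow_add_one h0.ne']; congr 1; ring
      have h4 : f ^ (q - 1) ≤ t ^ (q - 1) := Real.rpow_le_rpow hf h (by linarith)
      have h5 := mul_le_mul_of_nonneg_right h4 hf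
      linarith
  · have h0 : 0 < f := ht.trans h
    have h3 : f ^ (2 * q) = f ^ q * f ^ q := by
      rw [← Real.rpow_add h0]; congr 1; ring
    have h4 : t ^ q ≤ f ^ q := Real.rpow_le_rpow ht.le h.le (by linarith)
    have h5 : 0 < t ^ q := by positivity
    have h6 : f ^ q ≤ (t ^ q)⁻¹ * f ^ (2 * q) := by
      rw [h3, ← mul_assoc]
      refine le_mul_of_one_le_left (by positivity) ?_
      rw [inv_mul_eq_div, one_le_div h5]
      exact h4
    linarith

/-- Numerical absorption: `K`, `U`, `m` play the roles of the moments of order `2q`, `q` and `1`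
of one nonnegative random variable. The bound `K ≤ a * U ^ 2 + b * W` is solved for `K` by choosing
`t` in the interpolation bound for `U`. -/
theorem absorb {q a b : ℝ} (hq : 1 ≤ q) (ha : 0 < a) (hb : 0 ≤ b) {K U m W : ℝ} (hK : 0 ≤ K)
    (hU : 0 ≤ U) (hm : 0 ≤ m) (hW : 0 ≤ W) (h : K ≤ a * U ^ 2 + b * W)
    (hint : ∀ t : ℝ, 0 < t → U ≤ t ^ (q - 1) * m + (t ^ q)⁻¹ * K) :
    K ≤ ((8 * a) ^ (2 * q) / (4 * a) + 3 * b) * (m ^ (2 * q) + W) := by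
  have hc1 : 0 ≤ (8 * a) ^ (2 * q) / (4 * a) := by positivity
  have hmp : 0 ≤ m ^ (2 * q) := by positivity
  have x1 : 0 ≤ (8 * a) ^ (2 * q) / (4 * a) * W := by positivity
  have x2 : 0 ≤ b * m ^ (2 * q) := by positivity
  have x3 : 0 ≤ (8 * a) ^ (2 * q) / (4 * a) * m ^ (2 * q) := by positivity
  have x4 : 0 ≤ b * W := by positivity
  have expand : ((8 * a) ^ (2 * q) / (4 * a) + 3 * b) * (m ^ (2 * q) + W) =
    (8 * a) ^ (2 * q) / (4 * a) * m ^ (2 * q) + (8 * a) ^ (2 * q) / (4 * a) * W +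
      3 * (b * m ^ (2 * q)) + 3 * (b * W) := by ring
  rw [expand]
  rcases hK.eq_or_lt with h0 | hpos
  · linarith
  -- with this `t` the term `(t ^ q)⁻¹ * K` contributes only `K / 2`
  set t : ℝ := (4 * a * K) ^ (2 * q)⁻¹ with ht
  have ht0 : 0 < t := by positivity
  have htp : t ^ (2 * q) = 4 * a * K := by
    rw [ht, ← Real.rpow_mul (by positivity), inv_mul_cancel₀ (by positivity), Real.rpow_one]
  set s := t ^ q with hs
  have hs0 : 0 < s := by positivity
  have hss : s ^ 2 = 4 * a * K := by
    rw [← htp, hs, ← Real.rpow_natCast, ← Real.rpow_mul ht0.le]; congr 1; push_cast; ring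
  have hU' := hint t ht0
  rw [Real.rpow_sub_one ht0.ne'] at hU'
  set r := m / t with hr
  have hr0 : 0 ≤ r := by positivity
  have hU2 : U ≤ s * r + s⁻¹ * K := by
    have : t ^ q / t * m = s * r := by rw [hr]; ring
    linarith
  have hU3 : U ^ 2 ≤ 2 * (s * r) ^ 2 + 2 * (s⁻¹ * K) ^ 2 := by
    have := pow_le_pow_left₀ hU hU2 2
    nlinarith [sq_nonneg (s * r - s⁻¹ * K)]
  have hU4 : a * U ^ 2 ≤ 8 * a ^ 2 * K * r ^ 2 + K / 2 := by
    have e1 : (s * r) ^ 2 = 4 * a * K * r ^ 2 := by rw [mul_pow, hss]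
    have e2 : (s⁻¹ * K) ^ 2 = K / (4 * a) := by
      rw [mul_pow, inv_pow, hss]; field_simp
    rw [e1, e2] at hU3
    calc a * U ^ 2 ≤ a * (2 * (4 * a * K * r ^ 2) + 2 * (K / (4 * a))) := by gcongr
      _ = _ := by field_simp; ring
  rcases le_or_gt r (1 / (8 * a)) with hle | hgt
  · have : a ^ 2 * r ^ 2 ≤ 1 / 64 := by
      have h1 : a * r ≤ 1 / 8 := by
        calc a * r ≤ a * (1 / (8 * a)) := by gcongr
          _ = 1 / 8 := by field_simp
      have h2 := pow_le_pow_left₀ (by positivity) h1 2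
      rw [mul_pow] at h2
      linarith
    have : 8 * a ^ 2 * K * r ^ 2 ≤ K / 8 := by nlinarith
    linarith
  · have htm : t ≤ 8 * a * m := by
      rw [hr, div_lt_div_iff₀ (by positivity) ht0] at hgt
      linarith
    have := Real.rpow_le_rpow ht0.le htm (by positivity : 0 ≤ 2 * q)
    rw [htp, Real.mul_rpow (by positivity) hm] at this
    have : K ≤ (8 * a) ^ (2 * q) / (4 * a) * m ^ (2 * q) := by
      rw [div_mul_eq_mul_div, le_div_iff₀ (by positivity)]
      linarith
    linarith

section Prob

variable {Ω : Type} [MeasurableSpace Ω] {μ : Measure Ω}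

theorem integrable_rpow_of_le [IsProbabilityMeasure μ] {W g : Ω → ℝ} {p r : ℝ}
    (hW : Integrable (fun ω => W ω ^ p) μ)
    (hg : Measurable g) (hg0 : ∀ ω, 0 ≤ g ω) (hgW : ∀ ω, g ω ≤ W ω) (hr : 0 ≤ r) (hrp : r ≤ p) :
    Integrable (fun ω => g ω ^ r) μ := by
  refine ((integrable_const (1 : ℝ)).add hW).mono' (hg.pow_const r).aestronglyMeasurable
    (Filter.Eventually.of_forall fun ω => ?_)
  have h0 := hg0 ω
  rw [Real.norm_of_nonneg (by positivity), Pi.add_apply]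
  have hW0 : 0 ≤ W ω := h0.trans (hgW ω)
  have h1 : g ω ^ r ≤ W ω ^ r := Real.rpow_le_rpow h0 (hgW ω) hr
  rcases le_total (W ω) 1 with h | h
  · have := Real.rpow_le_one hW0 h hr
    have := Real.rpow_nonneg hW0 p
    linarith
  · have := Real.rpow_le_rpow_of_exponent_le h hrp
    linarith

theorem integrable_sum_abs_rpow {ι : Type} {J : Finset ι} {Y : ι → Ω → ℝ} {p : ℝ} (hp : 1 ≤ p)
    (hm : ∀ i ∈ J, Measurable (Y i)) (hY : ∀ i ∈ J, Integrable (fun ω => |Y i ω| ^ p) μ) :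
    Integrable (fun ω => (∑ i ∈ J, |Y i ω|) ^ p) μ := by
  have hp0 : ENNReal.ofReal p ≠ 0 := by simp; linarith
  have h1 : ∀ i ∈ J, MemLp (fun ω => |Y i ω|) (ENNReal.ofReal p) μ := by
    intro i hi
    have : MemLp (Y i) (ENNReal.ofReal p) μ := by
      rw [← integrable_norm_rpow_iff (hm i hi).aestronglyMeasurable hp0 ENNReal.ofReal_ne_top,
        ENNReal.toReal_ofReal (by linarith)]
      exact hY i hi
    exact this.norm
  have h2 := memLp_finsetSum J h1
  have h3 := h2.integrable_norm_rpow hp0 ENNReal.ofReal_ne_top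
  rw [ENNReal.toReal_ofReal (by linarith)] at h3
  refine h3.congr (Filter.Eventually.of_forall fun ω => ?_)
  simp only
  rw [Real.norm_of_nonneg (Finset.sum_nonneg fun i _ => abs_nonneg _)]

theorem sq_integral_rpow_le [IsProbabilityMeasure μ] {g : Ω → ℝ} {q : ℝ} (hg0 : ∀ ω, 0 ≤ g ω)
    (h1 : Integrable (fun ω => g ω ^ q) μ) (h2 : Integrable (fun ω => g ω ^ (2 * q)) μ) :
    (∫ ω, g ω ^ q ∂μ) ^ 2 ≤ ∫ ω, g ω ^ (2 * q) ∂μ := by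
  set c := ∫ ω, g ω ^ q ∂μ with hc
  have h : ∫ ω, (2 * c * g ω ^ q - c ^ 2) ∂μ ≤ ∫ ω, g ω ^ (2 * q) ∂μ := by
    refine integral_mono ((h1.const_mul _).sub (integrable_const _)) h2 fun ω => ?_
    have : g ω ^ (2 * q) = (g ω ^ q) ^ 2 := by
      rw [mul_comm, Real.rpow_mul (hg0 ω), Real.rpow_two]
    simp only [this]
    nlinarith [sq_nonneg (g ω ^ q - c)]
  rw [integral_sub (h1.const_mul _) (integrable_const _), integral_const_mul, ← hc] at h
  simp at h
  nlinarith

/-! ### Decoupling by negative association -/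

theorem NegAssocOn.neg {ι : Type} {Y : ι → Ω → ℝ} {S : Set ι} (h : NegAssocOn μ Y S) :
    NegAssocOn μ (fun i ω => - Y i ω) S := by
  intro A B hA hB hAB f g hf hg hfi hgi hfgi
  have := h A B hA hB hAB (fun z => - f (fun i => - z i)) (fun z => - g (fun i => - z i))
    (fun z w hzw => neg_le_neg (hf fun i => neg_le_neg (hzw i)))
    (fun z w hzw => neg_le_neg (hg fun i => neg_le_neg (hzw i)))
    hfi.neg hgi.neg (by simpa using hfgi)
  simpa [integral_neg] using this

variable {d : ℕ} {J : Finset (Fin d → ℕ)} (hJ : J.Nonempty) {Y : (Fin d → ℕ) → Ω → ℝ}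

theorem measurable_finset_max {κ : Type} {K : Finset κ} (hK : K.Nonempty) {f : κ → Ω → ℝ}
    (hf : ∀ k ∈ K, Measurable (f k)) : Measurable fun ω => K.sup' hK fun k => f k ω := by
  have := Finset.measurable_sup' hK hf
  convert this using 1
  ext ω
  simp

theorem measurable_posMax {A : Finset (Fin d → ℕ)} (hA : A ⊆ J)
    (hm : ∀ i ∈ J, Measurable (Y i)) : Measurable fun ω => posMax J hJ A (fun i => Y i ω) := by
  unfold posMax
  refine measurable_finset_max hJ fun k _ => measurable_const.max ?_
  exact Finset.measurable_fun_sum _ fun i hi => hm i (hA (Finset.mem_filter.1 hi).1)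

theorem measurable_signMax (A : Finset (Fin d → ℕ))
    (hm : ∀ i ∈ J, Measurable (Y i)) : Measurable fun ω => signMax J hJ A (fun i => Y i ω) := by
  unfold signMax
  refine measurable_finset_max hJ fun k _ => Measurable.abs ?_
  exact Finset.measurable_fun_sum _ fun i hi => (hm i (Finset.mem_filter.1 hi).1).const_mul _

/-- Negative association decouples the two halves `A` and `J \ A`: each `posMax` is a nondecreasing
function of the variables indexed by its half. -/
theorem posMax_decouple [IsProbabilityMeasure μ] {q : ℝ} (hq : 1 ≤ q)
    {A : Finset (Fin d → ℕ)} (hA : A ⊆ J)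
    (hm : ∀ i ∈ J, Measurable (Y i)) (hNA : NegAssocOn μ Y ↑J)
    (hY : ∀ i ∈ J, Integrable (fun ω => |Y i ω| ^ (2 * q)) μ) :
    Integrable (fun ω => posMax J hJ A (fun i => Y i ω) ^ q *
        posMax J hJ (J \ A) (fun i => Y i ω) ^ q) μ ∧
      ∫ ω, posMax J hJ A (fun i => Y i ω) ^ q * posMax J hJ (J \ A) (fun i => Y i ω) ^ q ∂μ ≤
        (∫ ω, posMax J hJ A (fun i => Y i ω) ^ q ∂μ) *
          ∫ ω, posMax J hJ (J \ A) (fun i => Y i ω) ^ q ∂μ := by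
  have hW := integrable_sum_abs_rpow (by linarith) hm hY
  have hi : ∀ B ⊆ J, Integrable (fun ω => posMax J hJ B (fun i => Y i ω) ^ q) μ := fun B hB =>
    integrable_rpow_of_le hW (measurable_posMax hJ hB hm) (fun ω => posMax_nonneg hJ B _)
      (fun ω => posMax_le_sum hJ hB _) (by linarith) (by linarith)
  have hB : J \ A ⊆ J := Finset.sdiff_subset
  have hprod : Integrable (fun ω => posMax J hJ A (fun i => Y i ω) ^ q *
        posMax J hJ (J \ A) (fun i => Y i ω) ^ q) μ := by
    refine hW.mono' (((measurable_posMax hJ hA hm).pow_const q).mul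
      ((measurable_posMax hJ hB hm).pow_const q)).aestronglyMeasurable
      (Filter.Eventually.of_forall fun ω => ?_)
    have h1 := posMax_nonneg hJ A (fun i => Y i ω)
    have h2 := posMax_nonneg hJ (J \ A) (fun i => Y i ω)
    rw [Real.norm_of_nonneg (by positivity)]
    have h3 := posMax_le_sum hJ hA (fun i => Y i ω)
    have h4 := posMax_le_sum hJ hB (fun i => Y i ω)
    have h5 : (∑ i ∈ J, |Y i ω|) ^ (2 * q) = (∑ i ∈ J, |Y i ω|) ^ q * (∑ i ∈ J, |Y i ω|) ^ q := by
      rw [mul_comm, Real.rpow_mul (h1.trans h3), Real.rpow_two, sq]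
    rw [h5]
    gcongr
  refine ⟨hprod, ?_⟩
  -- monotone functions of the coordinates in `B`, obtained through extension by zero
  set extend : ∀ B : Finset (Fin d → ℕ), (↥B → ℝ) → (Fin d → ℕ) → ℝ :=
    fun B z i => if h : i ∈ B then z ⟨i, h⟩ else 0 with hext
  have hmono : ∀ B : Finset (Fin d → ℕ), Monotone fun z => posMax J hJ B (extend B z) ^ q := by
    intro B z w hzw
    refine Real.rpow_le_rpow (posMax_nonneg hJ B _) (posMax_mono hJ B fun i hi => ?_) (by linarith)
    simp only [hext, hi, dif_pos]
    exact hzw _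
  have heq : ∀ (B : Finset (Fin d → ℕ)) (ω : Ω),
      posMax J hJ B (extend B fun i => Y i ω) = posMax J hJ B (fun i => Y i ω) := by
    intro B ω
    refine le_antisymm (posMax_mono hJ B fun i hi => ?_) (posMax_mono hJ B fun i hi => ?_) <;>
      simp [hext, hi]
  have := hNA A (J \ A) (by exact_mod_cast hA) (by exact_mod_cast hB) Finset.disjoint_sdiff
    _ _ (hmono A) (hmono (J \ A))
  simp only [heq] at this
  exact this (hi A hA) (hi _ hB) hprod

end Prob

/-! ### The moment bound in terms of the square function -/

theorem sum_sq_le_sq_sum_abs {ι : Type} (J : Finset ι) (x : ι → ℝ) :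
    ∑ i ∈ J, x i ^ 2 ≤ (∑ i ∈ J, |x i|) ^ 2 := by
  rw [sq (∑ i ∈ J, |x i|), Finset.sum_mul]
  refine Finset.sum_le_sum fun i hi => ?_
  rw [← sq_abs, sq]
  exact mul_le_mul_of_nonneg_left
    (Finset.single_le_sum (f := fun i => |x i|) (fun j _ => abs_nonneg _) hi) (abs_nonneg _)

section Prob

variable {Ω : Type} [MeasurableSpace Ω] {μ : Measure Ω}

theorem integrable_sq_rpow {ι : Type} {J : Finset ι} {Y : ι → Ω → ℝ} {q : ℝ} (hq : 1 ≤ q)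
    (hm : ∀ i ∈ J, Measurable (Y i)) (hY : ∀ i ∈ J, Integrable (fun ω => |Y i ω| ^ (2 * q)) μ) :
    Integrable (fun ω => ((∑ i ∈ J, |Y i ω|) ^ 2) ^ q) μ := by
  refine (integrable_sum_abs_rpow (by linarith) hm hY).congr
    (Filter.Eventually.of_forall fun ω => ?_)
  have h0 : 0 ≤ ∑ i ∈ J, |Y i ω| := Finset.sum_nonneg fun i _ => abs_nonneg _
  simp only
  rw [Real.rpow_mul h0, Real.rpow_two]

/-- Main step: with `F = posMax J hJ J Y` and `V = ∑ Y i ^ 2`, the moment `E F ^ (2 * q)` is bounded by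
`(E F ^ q) ^ 2` and `E V ^ q`. The index set is split into `A` and `J \ A` by `posMax_split`, the two
halves are decoupled, and `A` is chosen so that its signed maximum is at most the average. -/
theorem posMax_moment_step [IsProbabilityMeasure μ] {d : ℕ} {J : Finset (Fin d → ℕ)}
    (hJ : J.Nonempty) {Y : (Fin d → ℕ) → Ω → ℝ} {q : ℝ} (hq : 1 ≤ q) {C : ℝ}
    (hC : ∀ x : (Fin d → ℕ) → ℝ, ∑ A ∈ J.powerset, signMax J hJ A x ^ (2 * q) ≤
        2 ^ J.card * (C * (∑ i ∈ J, x i ^ 2) ^ q))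
    (hm : ∀ i ∈ J, Measurable (Y i)) (hNA : NegAssocOn μ Y ↑J)
    (hY : ∀ i ∈ J, Integrable (fun ω => |Y i ω| ^ (2 * q)) μ) :
    ∫ ω, posMax J hJ J (fun i => Y i ω) ^ (2 * q) ∂μ ≤
      2 * 16 ^ q * (∫ ω, posMax J hJ J (fun i => Y i ω) ^ q ∂μ) ^ 2 +
        (2 * 16 ^ q + 4 ^ q) * C * ∫ ω, (∑ i ∈ J, Y i ω ^ 2) ^ q ∂μ := by
  have hW := integrable_sum_abs_rpow (by linarith) hm hY
  have hW2 := integrable_sq_rpow hq hm hY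
  have hV : Integrable (fun ω => (∑ i ∈ J, Y i ω ^ 2) ^ q) μ :=
    integrable_rpow_of_le hW2 (Finset.measurable_fun_sum _ fun i hi => (hm i hi).pow_const 2)
      (fun ω => Finset.sum_nonneg fun i _ => sq_nonneg _) (fun ω => sum_sq_le_sq_sum_abs J _)
      (by linarith) le_rfl
  have hF : ∀ B ⊆ J, ∀ r, 0 ≤ r → r ≤ 2 * q →
      Integrable (fun ω => posMax J hJ B (fun i => Y i ω) ^ r) μ := fun B hB r h1 h2 =>
    integrable_rpow_of_le hW (measurable_posMax hJ hB hm) (fun ω => posMax_nonneg hJ B _)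
      (fun ω => posMax_le_sum hJ hB _) h1 h2
  have hG : ∀ B, ∀ r, 0 ≤ r → r ≤ 2 * q →
      Integrable (fun ω => signMax J hJ B (fun i => Y i ω) ^ r) μ := fun B r h1 h2 =>
    integrable_rpow_of_le hW (measurable_signMax hJ B hm) (fun ω => signMax_nonneg hJ B _)
      (fun ω => signMax_le_sum hJ B _) h1 h2
  -- a deterministic subset that is at least as good as the average over all subsets
  obtain ⟨A, hA, hAle⟩ : ∃ A ∈ J.powerset, ∫ ω, signMax J hJ A (fun i => Y i ω) ^ (2 * q) ∂μ ≤
      C * ∫ ω, (∑ i ∈ J, Y i ω ^ 2) ^ q ∂μ := by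
    refine Finset.exists_le_of_sum_le (Finset.powerset_nonempty J) ?_
    rw [Finset.sum_const, Finset.card_powerset, nsmul_eq_mul,
      ← integral_finsetSum _ (fun A _ => hG A _ (by linarith) le_rfl), ← integral_const_mul,
      ← integral_const_mul]
    push_cast
    exact integral_mono (integrable_finsetSum _ fun A _ => hG A _ (by linarith) le_rfl)
      ((hV.const_mul _).const_mul _) fun ω => hC _
  have hAJ : A ⊆ J := Finset.mem_powerset.1 hA
  have hBJ : J \ A ⊆ J := Finset.sdiff_subset
  obtain ⟨hprod, hdec⟩ := posMax_decouple hJ hq hAJ hm hNA hY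
  set U := ∫ ω, posMax J hJ J (fun i => Y i ω) ^ q ∂μ
  set γ := ∫ ω, signMax J hJ A (fun i => Y i ω) ^ q ∂μ
  set Γ := ∫ ω, signMax J hJ A (fun i => Y i ω) ^ (2 * q) ∂μ
  have hU0 : 0 ≤ U := integral_nonneg fun ω => Real.rpow_nonneg (posMax_nonneg hJ J _) _
  have hγ0 : 0 ≤ γ := integral_nonneg fun ω => Real.rpow_nonneg (signMax_nonneg hJ A _) _
  have hγΓ : γ ^ 2 ≤ Γ := sq_integral_rpow_le (fun ω => signMax_nonneg hJ A _)
    (hG A _ (by linarith) (by linarith)) (hG A _ (by linarith) le_rfl)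
  have hhalf : ∀ B ⊆ J, (∀ ω, signMax J hJ B (fun i => Y i ω) = signMax J hJ A (fun i => Y i ω)) →
      ∫ ω, posMax J hJ B (fun i => Y i ω) ^ q ∂μ ≤ U + γ := by
    intro B hB hBA
    rw [← integral_add (hF J subset_rfl q (by linarith) (by linarith))
      (hG A q (by linarith) (by linarith))]
    refine integral_mono (hF B hB q (by linarith) (by linarith))
      ((hF J subset_rfl q (by linarith) (by linarith)).add
        (hG A q (by linarith) (by linarith))) fun ω => ?_
    have := posMax_subset_rpow_le hJ (by linarith : 0 ≤ q) hB (fun i => Y i ω)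
    rw [hBA] at this
    exact this
  have h1 := hhalf A hAJ fun ω => rfl
  have h2 := hhalf (J \ A) hBJ fun ω => signMax_compl hJ A _
  have h3 : ∫ ω, posMax J hJ A (fun i => Y i ω) ^ q *
      posMax J hJ (J \ A) (fun i => Y i ω) ^ q ∂μ ≤ 2 * U ^ 2 + 2 * Γ := by
    have h4 := mul_le_mul h1 h2
      (integral_nonneg fun ω => Real.rpow_nonneg (posMax_nonneg hJ (J \ A) _) _) (by linarith)
    nlinarith [sq_nonneg (U - γ)]
  have h5 : ∫ ω, posMax J hJ J (fun i => Y i ω) ^ (2 * q) ∂μ ≤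
      16 ^ q * (∫ ω, posMax J hJ A (fun i => Y i ω) ^ q *
        posMax J hJ (J \ A) (fun i => Y i ω) ^ q ∂μ) + 4 ^ q * Γ := by
    have hΓi := hG A (2 * q) (by linarith) le_rfl
    rw [← integral_const_mul, ← integral_const_mul,
      ← integral_add (hprod.const_mul _) (hΓi.const_mul _)]
    exact integral_mono (hF J subset_rfl _ (by linarith) le_rfl)
      ((hprod.const_mul _).add (hΓi.const_mul _))
      fun ω => posMax_split hJ (by linarith) hAJ _
  calc _ ≤ _ := h5
    _ ≤ 16 ^ q * (2 * U ^ 2 + 2 * Γ) + 4 ^ q * Γ := by gcongr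
    _ = 2 * 16 ^ q * U ^ 2 + (2 * 16 ^ q + 4 ^ q) * Γ := by ring
    _ ≤ 2 * 16 ^ q * U ^ 2 + (2 * 16 ^ q + 4 ^ q) *
          (C * ∫ ω, (∑ i ∈ J, Y i ω ^ 2) ^ q ∂μ) := by gcongr
    _ = _ := by ring

end Prob

/-- The term `(E F ^ q) ^ 2` in `posMax_moment_step` is interpolated between `E F` and
`E F ^ (2 * q)`, and the latter is absorbed into the left-hand side. -/
theorem posMax_moment (q : ℝ) (hq : 1 ≤ q) (d : ℕ) : ∃ C : ℝ, 0 ≤ C ∧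
    ∀ (Ω : Type) (_ : MeasurableSpace Ω) (μ : Measure Ω), IsProbabilityMeasure μ →
    ∀ (J : Finset (Fin d → ℕ)) (hJ : J.Nonempty) (Y : (Fin d → ℕ) → Ω → ℝ),
    (∀ i ∈ J, Measurable (Y i)) → NegAssocOn μ Y ↑J →
    (∀ i ∈ J, Integrable (fun ω => |Y i ω| ^ (2 * q)) μ) →
    ∫ ω, posMax J hJ J (fun i => Y i ω) ^ (2 * q) ∂μ ≤
      C * ((∫ ω, posMax J hJ J (fun i => Y i ω) ∂μ) ^ (2 * q) +
        ∫ ω, (∑ i ∈ J, Y i ω ^ 2) ^ q ∂μ) := by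
  obtain ⟨C, hC0, hC⟩ := signMax_khintchine (2 * q) (by linarith) d
  refine ⟨(8 * (2 * 16 ^ q)) ^ (2 * q) / (4 * (2 * 16 ^ q)) + 3 * ((2 * 16 ^ q + 4 ^ q) * C),
    by positivity, fun Ω _ μ _ J hJ Y hm hNA hY => ?_⟩
  have hstep := posMax_moment_step hJ hq (C := C) (fun x => by
    have := hC J hJ x
    rwa [mul_div_cancel_left₀ q two_ne_zero] at this) hm hNA hY
  have hW := integrable_sum_abs_rpow (by linarith) hm hY
  have hF : ∀ r, 0 ≤ r → r ≤ 2 * q →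
      Integrable (fun ω => posMax J hJ J (fun i => Y i ω) ^ r) μ := fun r h1 h2 =>
    integrable_rpow_of_le hW (measurable_posMax hJ subset_rfl hm)
      (fun ω => posMax_nonneg hJ J _) (fun ω => posMax_le_sum hJ subset_rfl _) h1 h2
  have hF1 : Integrable (fun ω => posMax J hJ J (fun i => Y i ω)) μ := by
    simpa using hF 1 zero_le_one (by linarith)
  refine absorb hq (a := 2 * 16 ^ q) (b := (2 * 16 ^ q + 4 ^ q) * C) (by positivity)
    (by positivity) (integral_nonneg fun ω => Real.rpow_nonneg (posMax_nonneg hJ J _) _)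
    (integral_nonneg fun ω => Real.rpow_nonneg (posMax_nonneg hJ J _) _)
    (integral_nonneg fun ω => posMax_nonneg hJ J _)
    (integral_nonneg fun ω => Real.rpow_nonneg (Finset.sum_nonneg fun i _ => sq_nonneg _) _)
    hstep fun t ht => ?_
  have h2 := hF (2 * q) (by linarith) le_rfl
  rw [← integral_const_mul, ← integral_const_mul,
    ← integral_add (hF1.const_mul _) (h2.const_mul _)]
  exact integral_mono (hF q (by linarith) (by linarith)) ((hF1.const_mul _).add (h2.const_mul _))
    fun ω => rpow_le_interp hq (posMax_nonneg hJ J _) ht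

/-! ### Rosenthal's inequality for squared positive parts -/

theorem add_rpow_le_two_rpow {a b r : ℝ} (ha : 0 ≤ a) (hb : 0 ≤ b) (hr : 0 ≤ r) :
    (a + b) ^ r ≤ 2 ^ r * (a ^ r + b ^ r) := by
  have h1 : (a + b) ^ r ≤ (2 * max a b) ^ r := by
    refine Real.rpow_le_rpow (by positivity) ?_ hr
    linarith [le_max_left a b, le_max_right a b]
  rw [Real.mul_rpow (by norm_num) (le_max_of_le_left ha)] at h1
  refine h1.trans (mul_le_mul_of_nonneg_left ?_ (by positivity))
  have := Real.rpow_nonneg ha r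
  have := Real.rpow_nonneg hb r
  rcases max_choice a b with h | h <;> rw [h] <;> linarith

/-- Rosenthal's inequality for the nonnegative variables `Z i = (max 0 (Y i)) ^ 2`. Writing
`S ^ q = ∑ Z i * S ^ (q - 1)` and removing `Z i` from the second factor, negative association bounds
`E (Z i * (S - Z i) ^ (q - 1))` by `E (Z i) * E S ^ (q - 1)`; then `E S ^ (q - 1)` is interpolated
against `E S ^ q`, which is absorbed. -/
theorem rosenthal_pos {Ω : Type} [MeasurableSpace Ω] {μ : Measure Ω} [IsProbabilityMeasure μ]
    {ι : Type} {J : Finset ι} {Y : ι → Ω → ℝ} {q : ℝ} (hq : 1 ≤ q)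
    (hm : ∀ i ∈ J, Measurable (Y i)) (hNA : NegAssocOn μ Y ↑J)
    (hY : ∀ i ∈ J, Integrable (fun ω => |Y i ω| ^ (2 * q)) μ) :
    ∫ ω, (∑ i ∈ J, (max 0 (Y i ω)) ^ 2) ^ q ∂μ ≤
      (2 ^ q + (2 ^ q) ^ q) *
        ((∑ i ∈ J, ∫ ω, Y i ω ^ 2 ∂μ) ^ q + ∑ i ∈ J, ∫ ω, |Y i ω| ^ (2 * q) ∂μ) := by
  set r := q - 1 with hr
  have hr0 : 0 ≤ r := by linarith
  have hqr : q = r + 1 := by rw [hr]; ring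
  have hmul : ∀ a : ℝ, 0 ≤ a → a * a ^ r = a ^ q := by
    intro a ha
    rw [hqr, Real.rpow_add_one' ha (by linarith), mul_comm]
  set Z : ι → Ω → ℝ := fun i ω => (max 0 (Y i ω)) ^ 2 with hZ
  have hZ0 : ∀ i ω, 0 ≤ Z i ω := fun i ω => sq_nonneg _
  have hZY : ∀ i ω, Z i ω ≤ Y i ω ^ 2 := by
    intro i ω
    simp only [hZ]
    rcases max_choice 0 (Y i ω) with h | h <;> rw [h]
    nlinarith [sq_nonneg (Y i ω)]
  have hZm : ∀ i ∈ J, Measurable (Z i) := fun i hi => (measurable_const.max (hm i hi)).pow_const 2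
  have hW2 := integrable_sq_rpow hq hm hY
  have hsub : ∀ B ⊆ J, ∀ s, 0 ≤ s → s ≤ q →
      Integrable (fun ω => (∑ i ∈ B, Z i ω) ^ s) μ := by
    intro B hB s h1 h2
    refine integrable_rpow_of_le hW2 (Finset.measurable_fun_sum _ fun i hi => hZm i (hB hi))
      (fun ω => Finset.sum_nonneg fun i _ => hZ0 i ω) (fun ω => ?_) h1 h2
    refine le_trans ?_ (sum_sq_le_sq_sum_abs J _)
    exact (Finset.sum_le_sum_of_subset_of_nonneg hB fun i _ _ => hZ0 i ω).trans
      (Finset.sum_le_sum fun i _ => hZY i ω)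
  have hZq : ∀ i ∈ J, ∀ s, 0 ≤ s → s ≤ q → Integrable (fun ω => Z i ω ^ s) μ := by
    intro i hi s h1 h2
    simpa using hsub {i} (by simpa using hi) s h1 h2
  have hZ1 : ∀ i ∈ J, Integrable (Z i) μ := by
    intro i hi
    simpa using hZq i hi 1 zero_le_one hq
  have hY2 : ∀ i ∈ J, Integrable (fun ω => Y i ω ^ 2) μ := by
    intro i hi
    have := integrable_rpow_of_le (r := 2) (hY i hi) (hm i hi).abs (fun ω => abs_nonneg _)
      (fun ω => le_rfl) (by norm_num) (by linarith)
    simpa using this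
  set s := ∑ i ∈ J, ∫ ω, Y i ω ^ 2 ∂μ with hs
  set P := ∑ i ∈ J, ∫ ω, |Y i ω| ^ (2 * q) ∂μ with hP
  set K := ∫ ω, (∑ i ∈ J, Z i ω) ^ q ∂μ with hK
  set L := ∫ ω, (∑ i ∈ J, Z i ω) ^ r ∂μ with hL
  have hS0 : ∀ ω, 0 ≤ ∑ i ∈ J, Z i ω := fun ω => Finset.sum_nonneg fun i _ => hZ0 i ω
  have hs0 : 0 ≤ s := Finset.sum_nonneg fun i _ => integral_nonneg fun ω => sq_nonneg _
  have hP0 : 0 ≤ P := Finset.sum_nonneg fun i _ => integral_nonneg fun ω => by positivity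
  have hK0 : 0 ≤ K := integral_nonneg fun ω => Real.rpow_nonneg (hS0 ω) _
  have hL0 : 0 ≤ L := integral_nonneg fun ω => Real.rpow_nonneg (hS0 ω) _
  have hcross_int : ∀ i ∈ J,
      Integrable (fun ω => Z i ω * (∑ j ∈ J.erase i, Z j ω) ^ r) μ := by
    intro i hi
    refine (hsub J subset_rfl q (by linarith) le_rfl).mono'
      ((hZm i hi).mul ((Finset.measurable_fun_sum _ fun j hj =>
        hZm j (Finset.erase_subset _ _ hj)).pow_const r)).aestronglyMeasurable
      (Filter.Eventually.of_forall fun ω => ?_)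
    have e0 : 0 ≤ ∑ j ∈ J.erase i, Z j ω := Finset.sum_nonneg fun i _ => hZ0 i ω
    have e1 : ∑ j ∈ J.erase i, Z j ω ≤ ∑ j ∈ J, Z j ω :=
      Finset.sum_le_sum_of_subset_of_nonneg (Finset.erase_subset _ _) fun i _ _ => hZ0 i ω
    have e2 : Z i ω ≤ ∑ j ∈ J, Z j ω := Finset.single_le_sum (fun j _ => hZ0 j ω) hi
    have := hZ0 i ω
    rw [Real.norm_of_nonneg (by positivity), ← hmul _ (hS0 ω)]
    have := hS0 ω
    gcongr
  have hcross : ∀ i ∈ J, ∫ ω, Z i ω * (∑ j ∈ J.erase i, Z j ω) ^ r ∂μ ≤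
      (∫ ω, Y i ω ^ 2 ∂μ) * L := by
    intro i hi
    have hsq : ∀ a b : ℝ, a ≤ b → (max 0 a) ^ 2 ≤ (max 0 b) ^ 2 := fun a b hab =>
      pow_le_pow_left₀ (le_max_left _ _) (max_le_max le_rfl hab) 2
    have hna := hNA {i} (J.erase i) (by simpa using hi)
      (by exact_mod_cast Finset.erase_subset _ _) (by simp)
      (fun z => (max 0 (z ⟨i, Finset.mem_singleton_self i⟩)) ^ 2)
      (fun z => (∑ j, (max 0 (z j)) ^ 2) ^ r)
      (fun z w hzw => hsq _ _ (hzw _))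
      (fun z w hzw => Real.rpow_le_rpow (Finset.sum_nonneg fun j _ => sq_nonneg _)
        (Finset.sum_le_sum fun j _ => hsq _ _ (hzw j)) hr0)
    have hco : ∀ ω, ∑ j : ↥(J.erase i), (max 0 (Y j ω)) ^ 2 = ∑ j ∈ J.erase i, Z j ω := fun ω =>
      Finset.sum_coe_sort (J.erase i) (fun j => Z j ω)
    simp only [hco] at hna
    have herase := hsub (J.erase i) (Finset.erase_subset _ _) r hr0 (by linarith)
    refine (hna (hZ1 i hi) herase (hcross_int i hi)).trans ?_
    refine mul_le_mul (integral_mono (hZ1 i hi) (hY2 i hi) (hZY i))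
      (integral_mono herase (hsub J subset_rfl r hr0 (by linarith)) fun ω => ?_)
      (integral_nonneg fun ω => Real.rpow_nonneg (Finset.sum_nonneg fun i _ => hZ0 i ω) _)
      (integral_nonneg fun ω => sq_nonneg _)
    exact Real.rpow_le_rpow (Finset.sum_nonneg fun i _ => hZ0 i ω)
      (Finset.sum_le_sum_of_subset_of_nonneg (Finset.erase_subset _ _) fun i _ _ => hZ0 i ω) hr0
  have hpt : ∀ ω, (∑ i ∈ J, Z i ω) ^ q ≤
      ∑ i ∈ J, 2 ^ r * (Z i ω ^ q + Z i ω * (∑ j ∈ J.erase i, Z j ω) ^ r) := by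
    intro ω
    rw [← hmul _ (hS0 ω), Finset.sum_mul]
    refine Finset.sum_le_sum fun i hi => ?_
    have e0 : 0 ≤ ∑ j ∈ J.erase i, Z j ω := Finset.sum_nonneg fun i _ => hZ0 i ω
    rw [← Finset.add_sum_erase J _ hi, ← hmul _ (hZ0 i ω)]
    calc _ ≤ Z i ω * (2 ^ r * (Z i ω ^ r + (∑ j ∈ J.erase i, Z j ω) ^ r)) :=
          mul_le_mul_of_nonneg_left (add_rpow_le_two_rpow (hZ0 i ω) e0 hr0) (hZ0 i ω)
      _ = _ := by ring
  have hmain : K ≤ 2 ^ r * (P + s * L) := by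
    have hi : ∀ i ∈ J, Integrable (fun ω => 2 ^ r *
        (Z i ω ^ q + Z i ω * (∑ j ∈ J.erase i, Z j ω) ^ r)) μ := fun i hi =>
      ((hZq i hi q (by linarith) le_rfl).add (hcross_int i hi)).const_mul _
    calc K ≤ ∫ ω, ∑ i ∈ J, 2 ^ r *
          (Z i ω ^ q + Z i ω * (∑ j ∈ J.erase i, Z j ω) ^ r) ∂μ :=
          integral_mono (hsub J subset_rfl q (by linarith) le_rfl)
            (integrable_finsetSum _ hi) hpt
      _ = ∑ i ∈ J, 2 ^ r * (∫ ω, Z i ω ^ q ∂μ +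
            ∫ ω, Z i ω * (∑ j ∈ J.erase i, Z j ω) ^ r ∂μ) := by
          rw [integral_finsetSum _ hi]
          refine Finset.sum_congr rfl fun i hi => ?_
          rw [integral_const_mul, integral_add (hZq i hi q (by linarith) le_rfl) (hcross_int i hi)]
      _ ≤ ∑ i ∈ J, 2 ^ r * (∫ ω, |Y i ω| ^ (2 * q) ∂μ + (∫ ω, Y i ω ^ 2 ∂μ) * L) := by
          refine Finset.sum_le_sum fun i hi => ?_
          have h1 : ∫ ω, Z i ω ^ q ∂μ ≤ ∫ ω, |Y i ω| ^ (2 * q) ∂μ := by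
            refine integral_mono (hZq i hi q (by linarith) le_rfl) (hY i hi) fun ω => ?_
            simp only
            rw [Real.rpow_mul (abs_nonneg _), Real.rpow_two, sq_abs]
            exact Real.rpow_le_rpow (hZ0 i ω) (hZY i ω) (by linarith)
          have h2 := hcross i hi
          gcongr
      _ = _ := by
          rw [← Finset.mul_sum, Finset.sum_add_distrib, ← Finset.sum_mul]
  have hLt : ∀ t : ℝ, 0 < t → L ≤ t ^ r + t⁻¹ * K := by
    intro t ht
    have hqi := hsub J subset_rfl q (by linarith) le_rfl
    have : ∫ ω, (t ^ r + t⁻¹ * (∑ i ∈ J, Z i ω) ^ q) ∂μ = t ^ r + t⁻¹ * K := by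
      rw [integral_add (integrable_const _) (hqi.const_mul _), integral_const_mul]
      simp [hK]
    rw [← this]
    refine integral_mono (hsub J subset_rfl r hr0 (by linarith))
      ((integrable_const _).add (hqi.const_mul _)) fun ω => ?_
    have hS := hS0 ω
    simp only
    rcases le_or_gt (∑ i ∈ J, Z i ω) t with h | h
    · have := Real.rpow_le_rpow hS h hr0
      have : 0 ≤ t⁻¹ * (∑ i ∈ J, Z i ω) ^ q := by positivity
      linarith
    · have h1 : (∑ i ∈ J, Z i ω) ^ r ≤ t⁻¹ * (∑ i ∈ J, Z i ω) ^ q := by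
        rw [← hmul _ hS, ← mul_assoc]
        refine le_mul_of_one_le_left (by positivity) ?_
        rw [inv_mul_eq_div, one_le_div ht]
        exact h.le
      have : 0 ≤ t ^ r := by positivity
      linarith
  have h2q : (2 : ℝ) ^ q = 2 * 2 ^ r := (hmul 2 (by norm_num)).symm
  have hcpos : (0 : ℝ) < 2 ^ r := by positivity
  have y1 : 0 ≤ (2 : ℝ) ^ q * s ^ q := by positivity
  have y2 : 0 ≤ ((2 : ℝ) ^ q) ^ q * P := by positivity
  have y3 : 0 ≤ ((2 : ℝ) ^ q) ^ q * s ^ q := by positivity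
  have y4 : 0 ≤ (2 : ℝ) ^ r * P := by positivity
  have y5 : (2 : ℝ) ^ q * P = 2 * (2 ^ r * P) := by rw [h2q]; ring
  have expand : ((2 : ℝ) ^ q + (2 ^ q) ^ q) * (s ^ q + P) =
    2 ^ q * s ^ q + 2 ^ q * P + (2 ^ q) ^ q * s ^ q + (2 ^ q) ^ q * P := by ring
  rw [expand]
  rcases hs0.eq_or_lt with h0 | hpos
  · rw [← h0, zero_mul, add_zero] at hmain
    linarith
  -- this `t` makes the `K`-term on the right-hand side equal to `K / 2`
  · set t := 2 ^ q * s with ht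
    have ht0 : 0 < t := by positivity
    have h1 := hLt t ht0
    have h2 : 2 ^ r * (s * L) ≤ t * t ^ r / 2 + K / 2 := by
      calc 2 ^ r * (s * L) ≤ 2 ^ r * (s * (t ^ r + t⁻¹ * K)) := by gcongr
        _ = t * t ^ r / 2 + K / 2 := by
          have : 2 ^ r * s = t / 2 := by rw [ht, h2q]; ring
          rw [← mul_assoc, this]
          field_simp
    rw [hmul t ht0.le, ht, Real.mul_rpow (by positivity) hs0] at h2
    rw [mul_add] at hmain
    linarith

/-! ### Conclusion -/

/-- The one-sided version of the main inequality: `posMax_moment` with `E V ^ q` replaced by moments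
of the individual variables, by applying `rosenthal_pos` to both `Y` and `-Y`. -/
theorem posMax_moment_rosenthal (q : ℝ) (hq : 1 ≤ q) (d : ℕ) : ∃ C : ℝ, 0 ≤ C ∧
    ∀ (Ω : Type) (_ : MeasurableSpace Ω) (μ : Measure Ω), IsProbabilityMeasure μ →
    ∀ (J : Finset (Fin d → ℕ)) (hJ : J.Nonempty) (Y : (Fin d → ℕ) → Ω → ℝ),
    (∀ i ∈ J, Measurable (Y i)) → NegAssocOn μ Y ↑J →
    (∀ i ∈ J, Integrable (fun ω => |Y i ω| ^ (2 * q)) μ) →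
    ∫ ω, posMax J hJ J (fun i => Y i ω) ^ (2 * q) ∂μ ≤
      C * ((∫ ω, posMax J hJ J (fun i => Y i ω) ∂μ) ^ (2 * q) +
        (∑ i ∈ J, ∫ ω, Y i ω ^ 2 ∂μ) ^ q + ∑ i ∈ J, ∫ ω, |Y i ω| ^ (2 * q) ∂μ) := by
  obtain ⟨C, hC0, hC⟩ := posMax_moment q hq d
  refine ⟨C * (1 + 2 ^ q * (2 * (2 ^ q + (2 ^ q) ^ q))), by positivity,
    fun Ω _ μ _ J hJ Y hm hNA hY => ?_⟩
  have h1 := hC Ω _ μ inferInstance J hJ Y hm hNA hY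
  have hp := rosenthal_pos hq hm hNA hY
  have hn := rosenthal_pos (Y := fun i ω => - Y i ω) hq (fun i hi => (hm i hi).neg) hNA.neg
    (by simpa using hY)
  simp only [neg_sq, abs_neg] at hn
  have hW2 := integrable_sq_rpow hq hm hY
  have hle : ∀ y : ℝ, (max 0 y) ^ 2 ≤ y ^ 2 := fun y => by
    rcases max_cases 0 y with ⟨h, _⟩ | ⟨h, _⟩ <;> rw [h]
    nlinarith
  have hip : Integrable (fun ω => (∑ i ∈ J, (max 0 (Y i ω)) ^ 2) ^ q) μ :=
    integrable_rpow_of_le hW2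
      (Finset.measurable_fun_sum _ fun i hi => (measurable_const.max (hm i hi)).pow_const 2)
      (fun ω => Finset.sum_nonneg fun i _ => sq_nonneg _)
      (fun ω => (Finset.sum_le_sum fun i _ => hle _).trans (sum_sq_le_sq_sum_abs J _))
      (by linarith) le_rfl
  have hin : Integrable (fun ω => (∑ i ∈ J, (max 0 (-Y i ω)) ^ 2) ^ q) μ :=
    integrable_rpow_of_le hW2
      (Finset.measurable_fun_sum _ fun i hi => (measurable_const.max (hm i hi).neg).pow_const 2)
      (fun ω => Finset.sum_nonneg fun i _ => sq_nonneg _)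
      (fun ω => (Finset.sum_le_sum fun i _ => (hle _).trans (neg_sq _).le).trans
        (sum_sq_le_sq_sum_abs J _))
      (by linarith) le_rfl
  have hV : Integrable (fun ω => (∑ i ∈ J, Y i ω ^ 2) ^ q) μ :=
    integrable_rpow_of_le hW2 (Finset.measurable_fun_sum _ fun i hi => (hm i hi).pow_const 2)
      (fun ω => Finset.sum_nonneg fun i _ => sq_nonneg _) (fun ω => sum_sq_le_sq_sum_abs J _)
      (by linarith) le_rfl
  have hsplit : ∫ ω, (∑ i ∈ J, Y i ω ^ 2) ^ q ∂μ ≤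
      2 ^ q * (∫ ω, (∑ i ∈ J, (max 0 (Y i ω)) ^ 2) ^ q ∂μ +
        ∫ ω, (∑ i ∈ J, (max 0 (-Y i ω)) ^ 2) ^ q ∂μ) := by
    rw [← integral_add hip hin, ← integral_const_mul]
    refine integral_mono hV ((hip.add hin).const_mul _) fun ω => ?_
    have e : ∑ i ∈ J, Y i ω ^ 2 =
        ∑ i ∈ J, (max 0 (Y i ω)) ^ 2 + ∑ i ∈ J, (max 0 (-Y i ω)) ^ 2 := by
      rw [← Finset.sum_add_distrib]
      refine Finset.sum_congr rfl fun i _ => ?_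
      rcases le_total 0 (Y i ω) with h | h
      · rw [max_eq_right h, max_eq_left (by linarith)]; ring
      · rw [max_eq_left h, max_eq_right (by linarith)]; ring
    simp only [e]
    exact add_rpow_le_two_rpow (Finset.sum_nonneg fun i _ => sq_nonneg _)
      (Finset.sum_nonneg fun i _ => sq_nonneg _) (by linarith)
  set m := (∫ ω, posMax J hJ J (fun i => Y i ω) ∂μ) ^ (2 * q)
  have hm0 : 0 ≤ m := Real.rpow_nonneg (integral_nonneg fun ω => posMax_nonneg hJ J _) _
  set s := (∑ i ∈ J, ∫ ω, Y i ω ^ 2 ∂μ) ^ q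
  have hs0 : 0 ≤ s := Real.rpow_nonneg
    (Finset.sum_nonneg fun i _ => integral_nonneg fun ω => sq_nonneg _) _
  set P := ∑ i ∈ J, ∫ ω, |Y i ω| ^ (2 * q) ∂μ
  have hP0 : 0 ≤ P := Finset.sum_nonneg fun i _ => integral_nonneg fun ω =>
    Real.rpow_nonneg (abs_nonneg _) _
  set c : ℝ := 2 ^ q + (2 ^ q) ^ q
  have hc0 : 0 ≤ c := by positivity
  have hb : (0 : ℝ) ≤ 2 ^ q := by positivity
  calc _ ≤ _ := h1
    _ ≤ C * (m + 2 ^ q * (c * (s + P) + c * (s + P))) := by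
        refine mul_le_mul_of_nonneg_left (add_le_add_right (hsplit.trans ?_) _) hC0
        gcongr
    _ ≤ C * ((1 + 2 ^ q * (2 * c)) * (m + s + P)) := by
        refine mul_le_mul_of_nonneg_left ?_ hC0
        have : 0 ≤ 2 ^ q * (2 * c) * m := by positivity
        nlinarith
    _ = _ := by ring

theorem sum_filter_Icc {d : ℕ} {n k : Fin d → ℕ} (hk : k ∈ Finset.Icc 1 n)
    (x : (Fin d → ℕ) → ℝ) :
    ∑ i ∈ Finset.Icc 1 n with i ≤ k, x i = ∑ i ∈ Finset.Icc 1 k, x i := by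
  have hkn := (Finset.mem_Icc.1 hk).2
  refine Finset.sum_congr ?_ fun _ _ => rfl
  ext i
  simp only [Finset.mem_filter, Finset.mem_Icc]
  exact ⟨fun h => ⟨h.1.1, h.2⟩, fun h => ⟨⟨h.1, h.2.trans hkn⟩, h.2⟩⟩

end Aux
/-- **Moment inequality for the maximum of partial sums** (Proposition 2.1, (2.4)).
For `p ≥ 2` and `d ≥ 1` there is a constant `A_{p,d}` such that for every negatively
associated field `{Y_k : k ≤ n}` with mean zero and finite `p`-th moments,
`E M_n^p ≤ A_{p,d} { (E M_n)^p + (Σ_{k ≤ n} E Y_k²)^{p/2} + Σ_{k ≤ n} E|Y_k|^p }`,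
where `M_n = max_{k ≤ n} |T_k|`. -/
theorem na_field_max_moment_inequality_with_mean
    (p : ℝ) (hp : 2 ≤ p) (d : ℕ) (hd : 1 ≤ d) :
    ∃ A : ℝ, ∀ (Ω : Type) (_ : MeasurableSpace Ω) (μ : Measure Ω),
      IsProbabilityMeasure μ →
      ∀ (n : Fin d → ℕ), (1 : Fin d → ℕ) ≤ n →
      ∀ (Y : (Fin d → ℕ) → Ω → ℝ),
      (∀ k ∈ Finset.Icc (1 : Fin d → ℕ) n, Measurable (Y k)) →
      NegAssocOn μ Y (Set.Icc 1 n) →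
      (∀ k ∈ Finset.Icc (1 : Fin d → ℕ) n, ∫ ω, Y k ω ∂μ = 0) →
      (∀ k ∈ Finset.Icc (1 : Fin d → ℕ) n, Integrable (fun ω => |Y k ω| ^ p) μ) →
      ∀ hn : ((Finset.Icc (1 : Fin d → ℕ) n).Nonempty),
      ∫ ω, ((Finset.Icc (1 : Fin d → ℕ) n).sup' hn
          (fun k => |∑ i ∈ Finset.Icc (1 : Fin d → ℕ) k, Y i ω|)) ^ p ∂μ ≤
        A * ((∫ ω, (Finset.Icc (1 : Fin d → ℕ) n).sup' hn
              (fun k => |∑ i ∈ Finset.Icc (1 : Fin d → ℕ) k, Y i ω|) ∂μ) ^ p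
          + (∑ k ∈ Finset.Icc (1 : Fin d → ℕ) n, ∫ ω, (Y k ω) ^ 2 ∂μ) ^ (p / 2)
          + ∑ k ∈ Finset.Icc (1 : Fin d → ℕ) n, ∫ ω, |Y k ω| ^ p ∂μ) := by
  obtain ⟨C, hC0, hC⟩ := posMax_moment_rosenthal (p / 2) (by linarith) d
  rw [mul_div_cancel₀ p two_ne_zero] at hC
  refine ⟨2 * C, fun Ω _ μ _ n _ Y hm hNA _ hY hn => ?_⟩
  have hp0 : 0 ≤ p := by linarith
  set J := Finset.Icc (1 : Fin d → ℕ) n with hJ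
  rw [← Finset.coe_Icc, ← hJ] at hNA
  set M : Ω → ℝ := fun ω => J.sup' hn fun k => |∑ i ∈ Finset.Icc (1 : Fin d → ℕ) k, Y i ω|
    with hM
  have hkM : ∀ ω, ∀ k ∈ J, |∑ i ∈ Finset.Icc (1 : Fin d → ℕ) k, Y i ω| ≤ M ω := fun ω k hk =>
    Finset.le_sup' (fun k => |∑ i ∈ Finset.Icc (1 : Fin d → ℕ) k, Y i ω|) hk
  have hM0 : ∀ ω, 0 ≤ M ω := fun ω => by
    obtain ⟨k, hk⟩ := hn
    exact (abs_nonneg _).trans (hkM ω k hk)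
  have hsubJ : ∀ k ∈ J, Finset.Icc 1 k ⊆ J := fun k hk =>
    Finset.Icc_subset_Icc le_rfl (Finset.mem_Icc.1 hk).2
  have hMm : Measurable M := measurable_finset_max hn fun k hk =>
    (Finset.measurable_fun_sum _ fun i hi => hm i (hsubJ k hk hi)).abs
  have hMW : ∀ ω, M ω ≤ ∑ i ∈ J, |Y i ω| := fun ω =>
    Finset.sup'_le _ _ fun k hk => (Finset.abs_sum_le_sum_abs _ _).trans
      (Finset.sum_le_sum_of_subset_of_nonneg (hsubJ k hk) fun i _ _ => abs_nonneg _)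
  have hW := integrable_sum_abs_rpow (by linarith) hm hY
  have hMp : Integrable (fun ω => M ω ^ p) μ := integrable_rpow_of_le hW hMm hM0 hMW hp0 le_rfl
  have hM1 : Integrable M μ := by
    simpa using integrable_rpow_of_le hW hMm hM0 hMW zero_le_one (by linarith)
  -- the one-sided bound, for any field `Z` among `Y` and `-Y`
  have hside : ∀ Z : (Fin d → ℕ) → Ω → ℝ, (∀ i ∈ J, Measurable (Z i)) → NegAssocOn μ Z ↑J →
      (∀ i ω, |Z i ω| = |Y i ω|) →
      (∀ ω k, |∑ i ∈ Finset.Icc 1 k, Z i ω| = |∑ i ∈ Finset.Icc 1 k, Y i ω|) →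
      Integrable (fun ω => posMax J hn J (fun i => Z i ω) ^ p) μ ∧
      ∫ ω, posMax J hn J (fun i => Z i ω) ^ p ∂μ ≤ C * ((∫ ω, M ω ∂μ) ^ p +
        (∑ i ∈ J, ∫ ω, Y i ω ^ 2 ∂μ) ^ (p / 2) + ∑ i ∈ J, ∫ ω, |Y i ω| ^ p ∂μ) := by
    intro Z hZm hZNA hZabs hZsum
    have hF0 : ∀ ω, 0 ≤ posMax J hn J (fun i => Z i ω) := fun ω => posMax_nonneg hn J _
    have hFM : ∀ ω, posMax J hn J (fun i => Z i ω) ≤ M ω := fun ω =>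
      Finset.sup'_le _ _ fun k hk => max_le (hM0 ω) (by
        rw [sum_filter_Icc hk]
        exact (le_abs_self _).trans ((hZsum ω k).le.trans (hkM ω k hk)))
    have hFm := measurable_posMax hn (subset_refl J) hZm
    have hFp := integrable_rpow_of_le hMp hFm hF0 hFM hp0 le_rfl
    have hF1 : Integrable (fun ω => posMax J hn J (fun i => Z i ω)) μ := by
      simpa using integrable_rpow_of_le hMp hFm hF0 hFM zero_le_one (by linarith)
    refine ⟨hFp, ?_⟩
    have h := hC Ω _ μ inferInstance J hn Z hZm hZNA (by simpa only [hZabs] using hY)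
    have hsq : ∀ i ω, Z i ω ^ 2 = Y i ω ^ 2 := fun i ω => by rw [← sq_abs, hZabs, sq_abs]
    simp only [hZabs, hsq] at h
    refine h.trans (mul_le_mul_of_nonneg_left ?_ hC0)
    have := Real.rpow_le_rpow (integral_nonneg hF0) (integral_mono hF1 hM1 hFM) hp0
    linarith
  obtain ⟨hip, hbp⟩ := hside Y hm hNA (fun _ _ => rfl) (fun _ _ => rfl)
  obtain ⟨hin, hbn⟩ := hside (fun i ω => -Y i ω) (fun i hi => (hm i hi).neg) hNA.neg
    (fun _ _ => abs_neg _) (fun ω k => by rw [Finset.sum_neg_distrib, abs_neg])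
  have hpt : ∀ ω, M ω ^ p ≤ posMax J hn J (fun i => Y i ω) ^ p +
      posMax J hn J (fun i => -Y i ω) ^ p := by
    intro ω
    have a0 := Real.rpow_nonneg (posMax_nonneg hn J fun i => Y i ω) p
    have b0 := Real.rpow_nonneg (posMax_nonneg hn J fun i => -Y i ω) p
    obtain ⟨k, hk, hkeq⟩ := Finset.exists_mem_eq_sup' hn
      (fun k => |∑ i ∈ Finset.Icc (1 : Fin d → ℕ) k, Y i ω|)
    change M ω = _ at hkeq
    have e1 := le_posMax hn J (fun i => Y i ω) hk
    have e2 := le_posMax hn J (fun i => -Y i ω) hk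
    rw [sum_filter_Icc hk] at e1 e2
    rw [Finset.sum_neg_distrib] at e2
    have hM0ω := hM0 ω
    rcases abs_choice (∑ i ∈ Finset.Icc (1 : Fin d → ℕ) k, Y i ω) with h | h <;> rw [h] at hkeq
    · have := Real.rpow_le_rpow hM0ω (hkeq.le.trans e1) hp0
      linarith
    · have := Real.rpow_le_rpow hM0ω (hkeq.le.trans e2) hp0
      linarith
  have hfin := integral_mono hMp (hip.add hin) hpt
  simp only [Pi.add_apply] at hfin
  rw [integral_add hip hin] at hfin
  linarith
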